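/- Let h̃₀(x,ξ) := −Σ_{η∈ℤ^d} ã_η(x) cosh(η·ξ) − V₀(x), where ã and V₀ satisfy: each ã_η smooth with ã_η(x) ≤ 0 for η ≠ 0, ã_η(x) = ã_{−η}(x), span{η : ã_η(x) < 0} = ℝ^d, Σ_η e^{c|η|} sup_{x∈K}|∂_x^β ã_η(x)| < ∞ for all c > 0, compact K, multi-index β; and V₀ ∈ C^∞(ℝ^d), V₀ ≥ 0, V₀(x) = 0 exactly when x = 0, with nondegenerate minimum at 0. Let ℓ be the Finsler function of h̃₀ at energy E = 0 on ℝ^d \ {0} (defined by ℓ(x,v) = ξ_{h̃₀}(x, λ(x,v)v)·v with ξ_{h̃₀}(x,·) = (∇_ξ h̃₀(x,·))^{-1} and λ(x,v) > 0 the unique number with h̃₀(x, ξ_{h̃₀}(x, λ(x,v)v)) = 0), extended by ℓ(0,·) := 0, and let d_ℓ(x,y) := inf ∫_0^1 ℓ(γ(t), γ̇(t)) dt over all C² curves γ : [0,1] → ℝ^d with γ̇(t) ≠ 0 for all t, γ(0) = x, γ(1) = y. Then d_ℓ is locally Lipschitz: for every compact K ⊂ ℝ^d there is C > 0 such that d_ℓ(x,y)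 ≤ C |x − y| for all x, y ∈ K. -/

import Mathlib

open scoped RealInnerProductSpace Classical
noncomputable section

/-- `ℝ^d` as a Euclidean space. -/
abbrev Ed (d : ℕ) := EuclideanSpace ℝ (Fin d)

/-- The lattice vector `η ∈ ℤ^d` regarded as a vector of `ℝ^d`. -/
def zv {d : ℕ} (η : Fin d → ℤ) : Ed d :=
  (EuclideanSpace.equiv (Fin d) ℝ).symm (fun i => (η i : ℝ))

/-!
On the level set `h̃₀(x, ξ) = 0` the identity `∑ η, -ã_η(x) (cosh (η·ξ) - 1) = V₀(x)` has
nonnegative summands, so `cosh t - 1 ≥ t² / 2` bounds `η·ξ` whenever `ã_η(x) < 0`. As these `η`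
span `ℝ^d` and finitely many of them suffice near a given point, `ξ` stays bounded for `x` in a
bounded set, whence `ℓ(x, v) ≤ C |v|`; moreover `ℓ ≥ 0`, because `h̃₀(x, ·)` increases along rays.
For `x ≠ y` the straight segment then gives `d_ℓ(x, y) ≤ C |x - y|`. For `x = y` the segment is not
a regular curve; there one contracts an arbitrary closed regular curve towards `x`.
-/

open Set Filter Topology Asymptotics Bornology

theorem one_add_sq_div_two_le_cosh (t : ℝ) : 1 + t ^ 2 / 2 ≤ Real.cosh t := by
  have hcosh : Real.cosh t = 1 + 2 * Real.sinh (t / 2) ^ 2 := by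
    rw [← mul_div_cancel₀ t (two_ne_zero' ℝ), Real.cosh_two_mul, Real.cosh_sq]
    ring_nf
  have hsinh : (t / 2) ^ 2 ≤ Real.sinh (t / 2) ^ 2 := by
    rw [sq_le_sq, Real.abs_sinh]
    exact Real.self_le_sinh_iff.2 (abs_nonneg _)
  linarith

theorem cosh_le_exp_abs (t : ℝ) : Real.cosh t ≤ Real.exp |t| := by
  rw [← Real.cosh_abs, ← Real.cosh_add_sinh]
  exact le_add_of_nonneg_right (Real.sinh_nonneg_iff.2 (abs_nonneg t))

theorem isBounded_biUnion_of_isCompact {X Y : Type*} [TopologicalSpace X] [Bornology Y]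
    {K : Set X} (hK : IsCompact K) {A : X → Set Y}
    (hA : ∀ x ∈ K, ∃ U ∈ 𝓝 x, IsBounded (⋃ y ∈ U, A y)) : IsBounded (⋃ x ∈ K, A x) := by
  refine hK.induction_on (p := fun s => IsBounded (⋃ x ∈ s, A x)) (by simp)
    (fun s t hst ht => ht.subset (biUnion_subset_biUnion_left hst))
    (fun s t hs ht => by rw [biUnion_union]; exact hs.union ht) fun x hx => ?_
  obtain ⟨U, hU, hb⟩ := hA x hx
  exact ⟨U, mem_nhdsWithin_of_mem_nhds hU, hb⟩

section InnerProduct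

variable {E : Type*} [NormedAddCommGroup E] [InnerProductSpace ℝ E]

theorem inner_nonneg_of_le_smul [CompleteSpace E] {f : E → ℝ} {g ξ : E} (hf : HasGradientAt f g ξ)
    (hmono : ∀ t : ℝ, 1 ≤ t → f ξ ≤ f (t • ξ)) : 0 ≤ ⟪g, ξ⟫ := by
  have hmin : IsMinOn f (segment ℝ ξ (ξ + ξ)) ξ := by
    rw [segment_eq_image']
    rintro _ ⟨t, ht, rfl⟩
    simpa [add_smul] using hmono (1 + t) (by linarith [ht.1])
  exact hmin.localize.hasFDerivWithinAt_nonneg hf.hasFDerivAt.hasFDerivWithinAt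
    (mem_posTangentConeAt_of_segment_subset Subset.rfl)

theorem isBigO_of_inner_of_span_eq_top [FiniteDimensional ℝ E] {α G : Type*} [NormedAddCommGroup G]
    {l : Filter α} {f : α → E} {g : α → G} {W : Set E} (hW : Submodule.span ℝ W = ⊤)
    (h : ∀ w ∈ W, (fun p => ⟪w, f p⟫) =O[l] g) : f =O[l] g := by
  have hall (u : E) : (fun p => ⟪u, f p⟫) =O[l] g := by
    induction (hW ▸ Submodule.mem_top : u ∈ Submodule.span ℝ W) using
      Submodule.span_induction with
    | mem w hw => exact h w hw
    | zero => simpa only [inner_zero_left] using isBigO_zero g l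
    | add u v _ _ hu hv => simpa only [inner_add_left] using hu.add hv
    | smul r u _ hu => simpa only [real_inner_smul_left] using hu.const_mul_left r
  let b := stdOrthonormalBasis ℝ E
  have hexpand : f = fun p => ∑ i, ⟪b i, f p⟫ • b i := funext fun p => (b.sum_repr' (f p)).symm
  rw [hexpand]
  refine IsBigO.fun_sum fun i _ => .trans (isBigO_of_le l fun p => ?_) (hall (b i))
  rw [norm_smul, b.norm_eq_one, mul_one]

theorem summable_mul_cosh_inner {ι : Type*} {w : ι → E} {b M : ι → ℝ} {c : ℝ} {ξ : E}
    (hξ : ‖ξ‖ ≤ c) (hb : ∀ η, |b η| ≤ M η)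
    (hM : Summable fun η => Real.exp (c * ‖w η‖) * M η) :
    Summable fun η => b η * Real.cosh ⟪w η, ξ⟫ := by
  refine hM.of_norm_bounded fun η => ?_
  have hinner : |⟪w η, ξ⟫| ≤ c * ‖w η‖ := by
    rw [mul_comm]
    exact (abs_real_inner_le_norm _ _).trans (mul_le_mul_of_nonneg_left hξ (norm_nonneg _))
  have hcosh : |Real.cosh ⟪w η, ξ⟫| ≤ Real.exp (c * ‖w η‖) := by
    rw [abs_of_pos (Real.cosh_pos _)]
    exact (cosh_le_exp_abs _).trans (Real.exp_le_exp.2 hinner)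
  rw [Real.norm_eq_abs, abs_mul, mul_comm]
  exact mul_le_mul hcosh (hb η) (abs_nonneg _) (Real.exp_pos _).le

end InnerProduct

section CoshSymbol

variable {X E ι : Type*} [NormedAddCommGroup E] [InnerProductSpace ℝ E]

/-- The Hamilton function `-∑ η, a_η(x) cosh (w_η·ξ) - V(x)` with frequencies `w`, coefficients `a`
and potential `V`. Where the series diverges, `∑'` gives `0`. -/
def coshSymbol (w : ι → E) (a : ι → X → ℝ) (V : X → ℝ) (x : X) (ξ : E) : ℝ :=
  -(∑' η, a η x * Real.cosh ⟪w η, ξ⟫) - V x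

variable {w : ι → E} {a : ι → X → ℝ} {V : X → ℝ} {x : X} {e : ℝ}

theorem coshSymbol_le_smul (ha : ∀ η, w η ≠ 0 → a η x ≤ 0)
    (hsum : ∀ ξ, Summable fun η => a η x * Real.cosh ⟪w η, ξ⟫) (ξ : E) {t : ℝ} (ht : 1 ≤ t) :
    coshSymbol w a V x ξ ≤ coshSymbol w a V x (t • ξ) := by
  have hterm (η : ι) : a η x * Real.cosh ⟪w η, t • ξ⟫ ≤ a η x * Real.cosh ⟪w η, ξ⟫ := by
    rcases eq_or_ne (w η) 0 with hη | hη
    · simp [hη]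
    · refine mul_le_mul_of_nonpos_left (Real.cosh_le_cosh.2 ?_) (ha η hη)
      rw [real_inner_smul_right, abs_mul]
      exact le_mul_of_one_le_left (abs_nonneg _) (ht.trans (le_abs_self t))
  have htsum := (hsum (t • ξ)).tsum_le_tsum hterm (hsum ξ)
  simp only [coshSymbol]
  linarith

theorem hasSum_neg_mul_cosh_sub_one {ξ : E} (hzero : HasSum (fun η => a η x) 0)
    (hsum : Summable fun η => a η x * Real.cosh ⟪w η, ξ⟫) (hξ : coshSymbol w a V x ξ = e) :
    HasSum (fun η => -a η x * (Real.cosh ⟪w η, ξ⟫ - 1)) (V x + e) := by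
  have hval : 0 - ∑' η, a η x * Real.cosh ⟪w η, ξ⟫ = V x + e := by
    rw [← hξ, coshSymbol]
    ring
  exact (hval ▸ hzero.sub hsum.hasSum).congr_fun fun η => by ring

theorem neg_mul_inner_sq_le {ξ : E} (ha : ∀ η, w η ≠ 0 → a η x ≤ 0)
    (hzero : HasSum (fun η => a η x) 0)
    (hsum : Summable fun η => a η x * Real.cosh ⟪w η, ξ⟫) (hξ : coshSymbol w a V x ξ = e)
    (η : ι) : -a η x * ⟪w η, ξ⟫ ^ 2 ≤ 2 * (V x + e) := by
  have hcosh : -a η x * (⟪w η, ξ⟫ ^ 2 / 2) ≤ -a η x * (Real.cosh ⟪w η, ξ⟫ - 1) := by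
    rcases eq_or_ne (w η) 0 with hη | hη
    · simp [hη]
    · exact mul_le_mul_of_nonneg_left (le_sub_iff_add_le'.2 (one_add_sq_div_two_le_cosh _))
        (neg_nonneg.2 (ha η hη))
  have hnonneg (κ : ι) : 0 ≤ -a κ x * (Real.cosh ⟪w κ, ξ⟫ - 1) := by
    rcases eq_or_ne (w κ) 0 with hκ | hκ
    · simp [hκ]
    · exact mul_nonneg (neg_nonneg.2 (ha κ hκ)) (sub_nonneg.2 (Real.one_le_cosh _))
  have hle := le_hasSum (hasSum_neg_mul_cosh_sub_one hzero hsum hξ) η fun κ _ => hnonneg κ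
  linarith

variable [TopologicalSpace X]

theorem isBigO_inner_coshSymbol_levelSet {x₀ : X} {η : ι} (ha : ∀ η, w η ≠ 0 → ∀ x, a η x ≤ 0)
    (hsum : ∀ x ξ, Summable fun η => a η x * Real.cosh ⟪w η, ξ⟫)
    (hzero : ∀ x, HasSum (fun η => a η x) 0) (hη : a η x₀ < 0)
    (haη : UpperSemicontinuousAt (a η) x₀) (hV : UpperSemicontinuousAt V x₀) :
    (fun p : X × E => ⟪w η, p.2⟫) =O[comap Prod.fst (𝓝 x₀) ⊓ 𝓟 {p | coshSymbol w a V p.1 p.2 = e}]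
      (1 : X × E → ℝ) := by
  set δ : ℝ := -a η x₀ / 2
  have hδ : 0 < δ := by simp only [δ]; linarith
  refine .of_bound √(2 * (V x₀ + 1 + e) / δ) (eventually_inf_principal.2 ?_)
  have hnear : ∀ᶠ x in 𝓝 x₀, a η x < -δ ∧ V x < V x₀ + 1 :=
    (haη _ (by simp only [δ]; linarith)).and (hV _ (lt_add_one _))
  filter_upwards [tendsto_comap.eventually hnear] with ⟨x, ξ⟩ ⟨hax, hVx⟩ hξ
  have hterm := neg_mul_inner_sq_le (fun κ hκ => ha κ hκ x) (hzero x) (hsum x ξ) hξ η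
  have hsq : ⟪w η, ξ⟫ ^ 2 ≤ 2 * (V x₀ + 1 + e) / δ := by
    rw [le_div_iff₀ hδ]
    nlinarith [sq_nonneg ⟪w η, ξ⟫]
  simpa using Real.abs_le_sqrt hsq

theorem isBounded_coshSymbol_levelSet [FiniteDimensional ℝ E]
    (ha : ∀ η, w η ≠ 0 → ∀ x, a η x ≤ 0)
    (hsum : ∀ x ξ, Summable fun η => a η x * Real.cosh ⟪w η, ξ⟫)
    (hzero : ∀ x, HasSum (fun η => a η x) 0)
    (hspan : ∀ x, Submodule.span ℝ {u | ∃ η, a η x < 0 ∧ u = w η} = ⊤)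
    (hacont : ∀ η, UpperSemicontinuous (a η)) (hV : UpperSemicontinuous V)
    {K : Set X} (hK : IsCompact K) :
    IsBounded (⋃ x ∈ K, {ξ | coshSymbol w a V x ξ = e}) := by
  refine isBounded_biUnion_of_isCompact hK fun x₀ _ => ?_
  have hbigO : (Prod.snd : X × E → E)
      =O[comap Prod.fst (𝓝 x₀) ⊓ 𝓟 {p | coshSymbol w a V p.1 p.2 = e}] (1 : X × E → ℝ) :=
    isBigO_of_inner_of_span_eq_top (hspan x₀) fun _ ⟨η, hη, hu⟩ =>
      hu ▸ isBigO_inner_coshSymbol_levelSet ha hsum hzero hη (hacont η x₀) (hV x₀)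
  obtain ⟨C, hC⟩ := hbigO.bound
  rw [eventually_inf_principal, eventually_comap] at hC
  refine ⟨_, hC, isBounded_iff_forall_norm_le.2 ⟨C, fun ξ hξ => ?_⟩⟩
  obtain ⟨x, hx, hxξ⟩ := mem_iUnion₂.1 hξ
  simpa using hx (x, ξ) rfl hxξ

end CoshSymbol

section FinslerFunction

variable {E : Type*} [NormedAddCommGroup E] [InnerProductSpace ℝ E] [CompleteSpace E]
  {h : E → E → ℝ} {e : ℝ} {S : Set E} {ℓ : E → E → ℝ}

/-- `ℓ` is a Finsler function of the Hamilton function `h` at energy `e` with singular set `S`: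
off `S` it is `ℓ x v = ξ·v`, where `ξ` lies on the energy surface `h x ξ = e` and the gradient of
`h x` at `ξ` is a positive multiple of `v`, and it is extended by `0`. The inverse of `∇_ξ h` enters
only through the existence of `ξ`. -/
structure IsFinslerFunction (h : E → E → ℝ) (e : ℝ) (S : Set E) (ℓ : E → E → ℝ) : Prop where
  eq_zero : ∀ x v, x ∈ S ∨ v = 0 → ℓ x v = 0
  exists_covector : ∀ x ∉ S, ∀ v ≠ 0, ∃ ξ, ∃ μ : ℝ, 0 < μ ∧
    HasGradientAt (h x) (μ • v) ξ ∧ h x ξ = e ∧ ℓ x v = ⟪ξ, v⟫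

namespace IsFinslerFunction

theorem of_rightInverse_gradient {ξh : E → E → E} {lam : E → E → ℝ}
    (hξh : ∀ x v, gradient (h x) (ξh x v) = v)
    (hlam : ∀ x ∉ S, ∀ v ≠ 0, 0 < lam x v ∧ h x (ξh x (lam x v • v)) = e)
    (hℓ : ∀ x v, ℓ x v = if x ∈ S ∨ v = 0 then 0 else ⟪ξh x (lam x v • v), v⟫) :
    IsFinslerFunction h e S ℓ where
  eq_zero x v hxv := (hℓ x v).trans (if_pos hxv)
  exists_covector x hx v hv := by
    obtain ⟨hpos, henergy⟩ := hlam x hx v hv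
    have hne : gradient (h x) (ξh x (lam x v • v)) ≠ 0 := by
      rw [hξh]
      exact smul_ne_zero hpos.ne' hv
    have hgrad :=
      (not_imp_comm.1 gradient_eq_zero_of_not_differentiableAt hne).hasGradientAt
    rw [hξh] at hgrad
    exact ⟨_, _, hpos, hgrad, henergy, (hℓ x v).trans (if_neg (not_or.2 ⟨hx, hv⟩))⟩

theorem nonneg (hℓ : IsFinslerFunction h e S ℓ)
    (hmono : ∀ x ξ, ∀ t : ℝ, 1 ≤ t → h x ξ ≤ h x (t • ξ)) (x v : E) : 0 ≤ ℓ x v := by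
  by_cases hxv : x ∈ S ∨ v = 0
  · exact (hℓ.eq_zero x v hxv).ge
  · push Not at hxv
    obtain ⟨ξ, μ, hμ, hgrad, -, hval⟩ := hℓ.exists_covector x hxv.1 v hxv.2
    have hinner := inner_nonneg_of_le_smul hgrad (hmono x ξ)
    rw [real_inner_smul_left, real_inner_comm] at hinner
    exact hval ▸ nonneg_of_mul_nonneg_right hinner hμ

theorem exists_le_mul_norm (hℓ : IsFinslerFunction h e S ℓ) {A : Set E}
    (hA : IsBounded (⋃ x ∈ A, {ξ | h x ξ = e})) :
    ∃ C, 0 < C ∧ ∀ x ∈ A, ∀ v, ℓ x v ≤ C * ‖v‖ := by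
  obtain ⟨C, hC, hbound⟩ := hA.exists_pos_norm_le
  refine ⟨C, hC, fun x hx v => ?_⟩
  by_cases hxv : x ∈ S ∨ v = 0
  · rw [hℓ.eq_zero x v hxv]
    positivity
  · push Not at hxv
    obtain ⟨ξ, -, -, -, henergy, hval⟩ := hℓ.exists_covector x hxv.1 v hxv.2
    rw [hval]
    exact (real_inner_le_norm ξ v).trans
      (mul_le_mul_of_nonneg_right (hbound ξ (mem_biUnion hx henergy)) (norm_nonneg v))

end IsFinslerFunction

end FinslerFunction

section FinslerDist

variable {F : Type*} [NormedAddCommGroup F] [NormedSpace ℝ F] {ℓ : F → F → ℝ}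

/-- The lengths `∫ ℓ(γ, γ̇)` of the regular `C²` curves from `x` to `y`. A curve along which the
integrand is not integrable contributes `0`. -/
def regularCurveLengths (ℓ : F → F → ℝ) (x y : F) : Set ℝ :=
  {L : ℝ | ∃ γ : ℝ → F,
    ContDiffOn ℝ 2 γ (Icc 0 1) ∧ γ 0 = x ∧ γ 1 = y ∧
    (∀ t ∈ Icc (0 : ℝ) 1, deriv γ t ≠ 0) ∧
    L = ∫ t in (0 : ℝ)..1, ℓ (γ t) (deriv γ t)}

/-- The distance induced by `ℓ`, the infimum of the lengths of the regular `C²` curves. It is `0`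
if no regular `C²` curve joins `x` to `y`, for instance if `x = y` on the line. -/
def finslerDist (ℓ : F → F → ℝ) (x y : F) : ℝ :=
  sInf (regularCurveLengths ℓ x y)

theorem nonneg_of_mem_regularCurveLengths (hℓ : ∀ x v, 0 ≤ ℓ x v) {x y : F} {L : ℝ}
    (hL : L ∈ regularCurveLengths ℓ x y) : 0 ≤ L := by
  obtain ⟨γ, -, -, -, -, rfl⟩ := hL
  exact intervalIntegral.integral_nonneg zero_le_one fun t _ => hℓ _ _

theorem finslerDist_le_of_forall_le (hℓ : ∀ x v, 0 ≤ ℓ x v) {γ : ℝ → F} {C : ℝ}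
    (hγ : ContDiffOn ℝ 2 γ (Icc 0 1)) (hγ' : ∀ t ∈ Icc (0 : ℝ) 1, deriv γ t ≠ 0)
    (hC : ∀ t ∈ Icc (0 : ℝ) 1, ℓ (γ t) (deriv γ t) ≤ C) : finslerDist ℓ (γ 0) (γ 1) ≤ C := by
  have hint : ‖∫ t in (0 : ℝ)..1, ℓ (γ t) (deriv γ t)‖ ≤ C * |1 - 0| := by
    refine intervalIntegral.norm_integral_le_of_norm_le_const fun t ht => ?_
    rw [uIoc_of_le zero_le_one] at ht
    rw [Real.norm_of_nonneg (hℓ _ _)]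
    exact hC t (Ioc_subset_Icc_self ht)
  calc finslerDist ℓ (γ 0) (γ 1) ≤ ∫ t in (0 : ℝ)..1, ℓ (γ t) (deriv γ t) :=
        csInf_le ⟨0, fun _ => nonneg_of_mem_regularCurveLengths hℓ⟩ ⟨γ, hγ, rfl, rfl, hγ', rfl⟩
    _ ≤ C := by simpa using (Real.le_norm_self _).trans hint

theorem finslerDist_le_mul_norm_sub (hℓ : ∀ x v, 0 ≤ ℓ x v) {x y : F} {C : ℝ} (hxy : x ≠ y)
    (hC : ∀ z ∈ segment ℝ x y, ∀ v, ℓ z v ≤ C * ‖v‖) : finslerDist ℓ x y ≤ C * ‖x - y‖ := by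
  have hderiv (t : ℝ) : deriv (AffineMap.lineMap x y : ℝ → F) t = y - x :=
    AffineMap.hasDerivAt_lineMap.deriv
  have hsmooth : ContDiff ℝ 2 (AffineMap.lineMap x y : ℝ → F) :=
    (ContinuousAffineMap.lineMap (R := ℝ) x y).contDiff
  have hlength : ∀ t ∈ Icc (0 : ℝ) 1,
      ℓ (AffineMap.lineMap x y t) (deriv (AffineMap.lineMap x y : ℝ → F) t) ≤ C * ‖x - y‖ := by
    intro t ht
    rw [hderiv, norm_sub_rev x y]
    exact hC _ (segment_eq_image_lineMap ℝ x y ▸ mem_image_of_mem _ ht) _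
  have hle := finslerDist_le_of_forall_le (γ := AffineMap.lineMap x y) hℓ
    hsmooth.contDiffOn
    (fun t _ => hderiv t ▸ sub_ne_zero.2 hxy.symm) hlength
  simpa using hle

theorem exists_norm_deriv_le_of_contDiffOn_Icc {γ : ℝ → F} {a b : ℝ} (hab : a < b)
    (hγ : ContDiffOn ℝ 1 γ (Icc a b)) (hdiff : ∀ t ∈ Icc a b, DifferentiableAt ℝ γ t) :
    ∃ M, ∀ t ∈ Icc a b, ‖deriv γ t‖ ≤ M := by
  have huniq := uniqueDiffOn_Icc hab
  obtain ⟨M, hM⟩ := isCompact_Icc.exists_bound_of_continuousOn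
    (hγ.continuousOn_derivWithin huniq le_rfl)
  exact ⟨M, fun t ht => (hdiff t ht).derivWithin (huniq t ht) ▸ hM t ht⟩

theorem finslerDist_self_le_of_loop (hℓ : ∀ x v, 0 ≤ ℓ x v) {x : F} {γ : ℝ → F} {B C M r s : ℝ}
    (hγ : ContDiffOn ℝ 2 γ (Icc 0 1)) (hγ0 : γ 0 = x) (hγ1 : γ 1 = x)
    (hγ' : ∀ t ∈ Icc (0 : ℝ) 1, deriv γ t ≠ 0)
    (hB : ∀ t ∈ Icc (0 : ℝ) 1, ‖γ t - x‖ ≤ B) (hM : ∀ t ∈ Icc (0 : ℝ) 1, ‖deriv γ t‖ ≤ M)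
    (hC₀ : 0 ≤ C) (hC : ∀ z ∈ Metric.closedBall x r, ∀ v, ℓ z v ≤ C * ‖v‖)
    (hs : 0 < s) (hsB : s * B ≤ r) : finslerDist ℓ x x ≤ C * (s * M) := by
  let κ : ℝ → F := fun t => x + s • (γ t - x)
  have hκ' (t : ℝ) : deriv κ t = s • deriv γ t := by
    simp only [κ, deriv_const_add, deriv_fun_const_smul_field, deriv_sub_const]
  have hκ_mem : ∀ t ∈ Icc (0 : ℝ) 1, κ t ∈ Metric.closedBall x r := fun t ht => by
    rw [mem_closedBall_iff_norm, add_sub_cancel_left, norm_smul, Real.norm_of_nonneg hs.le]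
    exact (mul_le_mul_of_nonneg_left (hB t ht) hs.le).trans hsB
  have hκ_norm : ∀ t ∈ Icc (0 : ℝ) 1, ‖deriv κ t‖ ≤ s * M := fun t ht => by
    rw [hκ', norm_smul, Real.norm_of_nonneg hs.le]
    exact mul_le_mul_of_nonneg_left (hM t ht) hs.le
  have hle := finslerDist_le_of_forall_le (γ := κ) hℓ
    (contDiffOn_const.add ((hγ.sub contDiffOn_const).const_smul s))
    (fun t ht => by rw [hκ']; exact smul_ne_zero hs.ne' (hγ' t ht))
    (fun t ht => (hC _ (hκ_mem t ht) _).trans (mul_le_mul_of_nonneg_left (hκ_norm t ht) hC₀))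
  simpa [κ, hγ0, hγ1] using hle

theorem finslerDist_self (hℓ : ∀ x v, 0 ≤ ℓ x v) {x : F} {C r : ℝ} (hr : 0 < r) (hC₀ : 0 ≤ C)
    (hC : ∀ z ∈ Metric.closedBall x r, ∀ v, ℓ z v ≤ C * ‖v‖) : finslerDist ℓ x x = 0 := by
  refine le_antisymm ?_ (Real.sInf_nonneg fun _ => nonneg_of_mem_regularCurveLengths hℓ)
  rcases (regularCurveLengths ℓ x x).eq_empty_or_nonempty with
    hempty | ⟨_, γ, hγ, hγ0, hγ1, hγ', -⟩
  · rw [finslerDist, hempty, Real.sInf_empty]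
  obtain ⟨M, hM⟩ := exists_norm_deriv_le_of_contDiffOn_Icc zero_lt_one (hγ.of_le one_le_two)
    fun t ht => differentiableAt_of_deriv_ne_zero (hγ' t ht)
  obtain ⟨B, hB⟩ := isCompact_Icc.exists_bound_of_continuousOn
    (hγ.continuousOn.sub (continuousOn_const (c := x)))
  have hlim : Tendsto (fun s : ℝ => C * (s * M)) (𝓝[>] 0) (𝓝 0) :=
    tendsto_nhdsWithin_of_tendsto_nhds (Continuous.tendsto' (by fun_prop) _ _ (by simp))
  have hsmall : ∀ᶠ s : ℝ in 𝓝[>] 0, s * B < r := by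
    have hcont : Continuous fun s : ℝ => s * B := by fun_prop
    exact (hcont.tendsto' 0 0 (zero_mul B)).mono_left nhdsWithin_le_nhds |>.eventually_lt_const hr
  refine ge_of_tendsto hlim ?_
  filter_upwards [hsmall, self_mem_nhdsWithin] with s hsB hs
  exact finslerDist_self_le_of_loop hℓ hγ hγ0 hγ1 hγ' hB hM hC₀ hC hs hsB.le

theorem exists_finslerDist_le_mul_norm_sub (hℓ : ∀ x v, 0 ≤ ℓ x v)
    (hbound : ∀ A : Set F, IsBounded A → ∃ C, 0 < C ∧ ∀ x ∈ A, ∀ v, ℓ x v ≤ C * ‖v‖)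
    {K : Set F} (hK : IsBounded K) :
    ∃ C, 0 < C ∧ ∀ x ∈ K, ∀ y ∈ K, finslerDist ℓ x y ≤ C * ‖x - y‖ := by
  obtain ⟨C, hC, hCK⟩ := hbound (convexHull ℝ K) (isBounded_convexHull.2 hK)
  refine ⟨C, hC, fun x hx y hy => ?_⟩
  rcases eq_or_ne x y with rfl | hxy
  · obtain ⟨D, hD, hDx⟩ := hbound (Metric.closedBall x 1) Metric.isBounded_closedBall
    simp [finslerDist_self hℓ one_pos hD.le hDx]
  · exact finslerDist_le_mul_norm_sub hℓ hxy fun z hz =>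
      hCK z (segment_subset_convexHull hx hy hz)

end FinslerDist

theorem stmt13_general {E ι : Type*} [NormedAddCommGroup E] [InnerProductSpace ℝ E]
    [FiniteDimensional ℝ E] {w : ι → E} {a : ι → E → ℝ} {V : E → ℝ} {e : ℝ} {S : Set E}
    {ℓ : E → E → ℝ} (ha : ∀ η, w η ≠ 0 → ∀ x, a η x ≤ 0)
    (hsum : ∀ x ξ, Summable fun η => a η x * Real.cosh ⟪w η, ξ⟫)
    (hzero : ∀ x, HasSum (fun η => a η x) 0)
    (hspan : ∀ x, Submodule.span ℝ {u | ∃ η, a η x < 0 ∧ u = w η} = ⊤)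
    (hacont : ∀ η, UpperSemicontinuous (a η)) (hV : UpperSemicontinuous V)
    (hℓ : IsFinslerFunction (coshSymbol w a V) e S ℓ) {K : Set E} (hK : IsBounded K) :
    ∃ C, 0 < C ∧ ∀ x ∈ K, ∀ y ∈ K, finslerDist ℓ x y ≤ C * ‖x - y‖ := by
  refine exists_finslerDist_le_mul_norm_sub
    (hℓ.nonneg fun x ξ _ => coshSymbol_le_smul (fun η hη => ha η hη x) (hsum x) ξ)
    (fun A hA => ?_) hK
  have hlevel := isBounded_coshSymbol_levelSet (e := e) ha hsum hzero hspan hacont hV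
    hA.isCompact_closure
  exact hℓ.exists_le_mul_norm (hlevel.subset (biUnion_subset_biUnion_left subset_closure))

theorem zv_zero {d : ℕ} : zv (0 : Fin d → ℤ) = 0 := by
  ext i
  simp [zv]

/-- Theorem 1.5, local Lipschitz continuity: the Finsler distance `d_ℓ` induced by the
one-well Hamilton function `h̃₀(x,ξ) = -Σ_η ã_η(x) cosh(η·ξ) - V₀(x)` at energy `0`
satisfies `d_ℓ(x,y) ≤ C |x-y|` locally uniformly in `x, y`. -/
theorem stmt13 (d : ℕ) (a : (Fin d → ℤ) → Ed d → ℝ) (V₀ : Ed d → ℝ)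
    (hsm : ∀ η : Fin d → ℤ, ContDiff ℝ (⊤ : ℕ∞) (a η))
    (hneg : ∀ η : Fin d → ℤ, η ≠ 0 → ∀ x : Ed d, a η x ≤ 0)
    (heven : ∀ (η : Fin d → ℤ) (x : Ed d), a η x = a (-η) x)
    (hzero : ∀ x : Ed d, HasSum (fun η : Fin d → ℤ => a η x) 0)
    (hspan : ∀ x : Ed d,
      Submodule.span ℝ {w : Ed d | ∃ η : Fin d → ℤ, a η x < 0 ∧ w = zv η} = ⊤)
    (hdecay : ∀ c : ℝ, 0 < c → ∀ K : Set (Ed d), IsCompact K → ∀ n : ℕ,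
      ∃ M : (Fin d → ℤ) → ℝ,
        (∀ η : Fin d → ℤ, ∀ x ∈ K, ‖iteratedFDeriv ℝ n (a η) x‖ ≤ M η) ∧
        Summable (fun η : Fin d → ℤ => Real.exp (c * ‖zv η‖) * M η))
    (hVsm : ContDiff ℝ (⊤ : ℕ∞) V₀)
    (hVpos : ∀ x : Ed d, 0 ≤ V₀ x)
    (hVzero : ∀ x : Ed d, V₀ x = 0 ↔ x = 0)
    (hVnd : ∀ v : Ed d, v ≠ 0 → 0 < iteratedFDeriv ℝ 2 V₀ 0 ![v, v])
    (h0 : Ed d → Ed d → ℝ)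
    (hh0 : ∀ x ξ : Ed d,
      h0 x ξ = -(∑' η : Fin d → ℤ, a η x * Real.cosh ⟪zv η, ξ⟫) - V₀ x)
    (ξh : Ed d → Ed d → Ed d)
    (hξh1 : ∀ x v : Ed d, gradient (h0 x) (ξh x v) = v)
    (hξh2 : ∀ x ξ : Ed d, ξh x (gradient (h0 x) ξ) = ξ)
    (lam : Ed d → Ed d → ℝ)
    (hlam : ∀ x : Ed d, x ≠ 0 → ∀ v : Ed d, v ≠ 0 →
      0 < lam x v ∧ h0 x (ξh x (lam x v • v)) = 0)
    (ℓ : Ed d → Ed d → ℝ)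
    (hℓ : ∀ x v : Ed d,
      ℓ x v = if x = 0 ∨ v = 0 then 0 else ⟪ξh x (lam x v • v), v⟫)
    (dl : Ed d → Ed d → ℝ)
    (hdl : ∀ x y : Ed d, dl x y = sInf {L : ℝ | ∃ γ : ℝ → Ed d,
      ContDiffOn ℝ 2 γ (Set.Icc 0 1) ∧ γ 0 = x ∧ γ 1 = y ∧
      (∀ t ∈ Set.Icc (0:ℝ) 1, deriv γ t ≠ 0) ∧
      L = ∫ t in (0:ℝ)..1, ℓ (γ t) (deriv γ t)}) :
    ∀ K : Set (Ed d), IsCompact K →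
      ∃ C : ℝ, 0 < C ∧ ∀ x ∈ K, ∀ y ∈ K, dl x y ≤ C * ‖x - y‖ := by
  obtain rfl : h0 = coshSymbol zv a V₀ := funext₂ hh0
  obtain rfl : dl = finslerDist ℓ := funext₂ hdl
  have hsum (x ξ : Ed d) : Summable fun η => a η x * Real.cosh ⟪zv η, ξ⟫ := by
    obtain ⟨M, hM, hMsum⟩ := hdecay (‖ξ‖ + 1) (by positivity) {x} isCompact_singleton 0
    refine summable_mul_cosh_inner (lt_add_one ‖ξ‖).le (fun η => ?_) hMsum
    simpa only [norm_iteratedFDeriv_zero, Real.norm_eq_abs] using hM η x rfl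
  have hF : IsFinslerFunction (coshSymbol zv a V₀) 0 {0} ℓ :=
    .of_rightInverse_gradient hξh1 hlam fun x v => by
      simp only [hℓ, mem_singleton_iff]
  exact fun K hK => stmt13_general (fun η hη => hneg η (ne_of_apply_ne zv (zv_zero ▸ hη))) hsum
    hzero hspan (fun η => (hsm η).continuous.upperSemicontinuous)
    hVsm.continuous.upperSemicontinuous hF hK.isBounded
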